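/- Let T be a type system, Ag a set of agents, and C a finite set of negative constraints of the form α ∋ A ⇒ B over T and Ag. Let B be an architecture over the safe type system T_C with set of agents Ag′ ⊇ Ag. Suppose there is a partition {P_α ⊆ Ag′}_{α ∈ Ag} of Ag′ indexed by Ag such that: (1) α ∈ P_α for all α ∈ Ag; (2) if β may send messages of type A to β′ (A ∈ M_{ββ′}) and β, β′ lie in different sets of the partition, then A has the form C_γ(B) for some γ, B; (3) if β initially possesses π_{αA} then β ∈ P_α; (4) for every constraint α ∋ A ⇒ B in C, if an agent β ∈ P_α initially possesses a constructor whose target type is A, then this constructor is π_{αA}. Then every valid trace through B satisfies every negative constraint in C. -/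

import Mathlib

namespace PrivacyByDesign

/-- Object-level types over a set `σ` of atomic types. -/
inductive Ty (σ : Type) : Type where
  | atom : σ → Ty σ
  | arrow : Ty σ → Ty σ → Ty σ

/-- `Ty.arrows [A₁, …, Aₙ] B` is the type `A₁ → ⋯ → Aₙ → B`. -/
def Ty.arrows {σ : Type} : List (Ty σ) → Ty σ → Ty σ
  | [], B => B
  | A :: As, B => Ty.arrow A (Ty.arrows As B)

/-- Rename the atomic types occurring in a type. -/
def Ty.mapAtom {σ σ' : Type} (f : σ → σ') : Ty σ → Ty σ'
  | .atom a => .atom (f a)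
  | .arrow A B => .arrow (Ty.mapAtom f A) (Ty.mapAtom f B)

/-- Terms over a set `κ` of constructors. -/
inductive Tm (κ : Type) : Type where
  | con : κ → Tm κ
  | app : Tm κ → Tm κ → Tm κ

/-- `Tm.apps f [t₁, …, tₘ]` is the applied term `f t₁ ⋯ tₘ`. -/
def Tm.apps {κ : Type} : Tm κ → List (Tm κ) → Tm κ
  | f, [] => f
  | f, t :: ts => Tm.apps (Tm.app f t) ts

/-- Rename the constructors occurring in a term. -/
def Tm.mapCon {κ κ' : Type} (g : κ → κ') : Tm κ → Tm κ'
  | .con c => .con (g c)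
  | .app s t => .app (Tm.mapCon g s) (Tm.mapCon g t)

/-- An architecture over a type system: each constructor `c : κ` has the type `conTy c`;
`H α` is the set of constructors that agent `α` initially possesses; `M α β` is the set
of atomic types that `α` may send in a message to `β`. -/
structure Arch (Ag σ κ : Type) : Type where
  conTy : κ → Ty σ
  H : Ag → Set κ
  M : Ag → Ag → Set σ

/-- An event `α →^{t : A} β`. -/
structure Event (Ag σ κ : Type) : Type where
  src : Ag
  tm : Tm κ
  ty : Ty σ
  tgt : Ag

/-- A trace is a finite sequence of events. -/
abbrev Trace (Ag σ κ : Type) : Type := List (Event Ag σ κ)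

/-- The derivable judgements `τ ⊢ α ∋ t : A`, generated by the rules
(init), (message₁), (message₂) and (func). -/
inductive Deriv {Ag σ κ : Type} (𝒜 : Arch Ag σ κ) :
    Trace Ag σ κ → Ag → Tm κ → Ty σ → Prop where
  | init {α : Ag} {c : κ} :
      c ∈ 𝒜.H α → Deriv 𝒜 [] α (Tm.con c) (𝒜.conTy c)
  | message₁ {τ : Trace Ag σ κ} {α β : Ag} {t : Tm κ} {A : σ} :
      A ∈ 𝒜.M α β → Deriv 𝒜 τ α t (Ty.atom A) →
      Deriv 𝒜 (τ ++ [⟨α, t, Ty.atom A, β⟩]) β t (Ty.atom A)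
  | message₂ {τ : Trace Ag σ κ} {α β γ : Ag} {t s : Tm κ} {A : σ} {C : Ty σ} :
      A ∈ 𝒜.M α β → Deriv 𝒜 τ α t (Ty.atom A) → Deriv 𝒜 τ γ s C →
      Deriv 𝒜 (τ ++ [⟨α, t, Ty.atom A, β⟩]) γ s C
  | func {τ : Trace Ag σ κ} {α : Ag} {f t : Tm κ} {A B : Ty σ} :
      Deriv 𝒜 τ α f (Ty.arrow A B) → Deriv 𝒜 τ α t A →
      Deriv 𝒜 τ α (Tm.app f t) B

/-- A trace `τ` is valid iff `τ ⊢ α ∋ t : A` is derivable for some `α`, `t`, `A`. -/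
def ValidTrace {Ag σ κ : Type} (𝒜 : Arch Ag σ κ) (τ : Trace Ag σ κ) : Prop :=
  ∃ α t A, Deriv 𝒜 τ α t A

/-- Agent `α` can compute terms of (atomic) type `A` iff it initially possesses a
constructor of type `B₁ → ⋯ → Bₙ → A` (with `n ≥ 0`). -/
def CanCompute {Ag σ κ : Type} (𝒜 : Arch Ag σ κ) (α : Ag) (A : σ) : Prop :=
  ∃ c ∈ 𝒜.H α, ∃ Bs : List (Ty σ), 𝒜.conTy c = Ty.arrows Bs (Ty.atom A)

/-- The chain of events `α₁ →^{t:B} α₂, …, αₙ₋₁ →^{t:B} αₙ` along the list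
`αs = [α₁, …, αₙ]`. -/
def chainEvents {Ag σ κ : Type} (t : Tm κ) (B : Ty σ) (αs : List Ag) : Trace Ag σ κ :=
  List.zipWith (fun a b => Event.mk a t B b) αs αs.tail

/-- Atomic types of the safe type system `T_C` (first algorithm): the base atomic types
of `T` together with the certified types `C_α(A)`. -/
inductive SAtom (Ag σ : Type) : Type where
  | base : σ → SAtom Ag σ
  | cert : Ag → σ → SAtom Ag σ

/-- Constructors of the safe type system `T_C` (first algorithm): the base constructors
of `T`, the constructors `m_{αA}^{β₁⋯βₙ}` (with the choice of `β₁, …, βₙ ∈ Ag` given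
as a function from indices), and the constructors `π_{αA}`. -/
inductive SCon (Ag σ κ : Type) : Type where
  | base : κ → SCon Ag σ κ
  | m : Ag → σ → (ℕ → Ag) → SCon Ag σ κ
  | pi : Ag → σ → SCon Ag σ κ

/-- The typing of the constructors of `T_C`, where `Cs α A` lists the types
`B₁, …, Bₙ` such that the constraints of `C` beginning with `α ∋ A` are
`α ∋ A ⇒ B₁, …, α ∋ A ⇒ Bₙ`:
`m_{αA}^{β₁⋯βₙ} : A → C_{β₁}(B₁) → ⋯ → C_{βₙ}(Bₙ) → C_α(A)` and
`π_{αA} : C_α(A) → A`. -/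
def safeConTy {Ag σ κ : Type} (conTy : κ → Ty σ) (Cs : Ag → σ → List σ) :
    SCon Ag σ κ → Ty (SAtom Ag σ)
  | .base c => Ty.mapAtom SAtom.base (conTy c)
  | .m α A βf =>
      Ty.arrows
        (Ty.atom (SAtom.base A) ::
          List.mapIdx (fun i B => Ty.atom (SAtom.cert (βf i) B)) (Cs α A))
        (Ty.atom (SAtom.cert α A))
  | .pi α A => Ty.arrow (Ty.atom (SAtom.cert α A)) (Ty.atom (SAtom.base A))

theorem arrows_atom_inj {σ : Type} {a b : σ} : ∀ {Ts Us : List (Ty σ)},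
    Ty.arrows Ts (Ty.atom a) = Ty.arrows Us (Ty.atom b) → Ts = Us ∧ a = b
  | [], [], h => by
      simp only [Ty.arrows, Ty.atom.injEq] at h
      exact ⟨rfl, h⟩
  | [], _ :: _, h => by simp [Ty.arrows] at h
  | _ :: _, [], h => by simp [Ty.arrows] at h
  | T :: Ts, U :: Us, h => by
      simp only [Ty.arrows, Ty.arrow.injEq] at h
      obtain ⟨h', h''⟩ := arrows_atom_inj h.2
      exact ⟨by rw [h.1, h'], h''⟩

theorem arrows_snoc {σ : Type} (A B : Ty σ) : ∀ Ts : List (Ty σ),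
    Ty.arrows (Ts ++ [A]) B = Ty.arrows Ts (Ty.arrow A B)
  | [] => rfl
  | T :: Ts => by
      simp only [List.cons_append, Ty.arrows]
      rw [arrows_snoc A B Ts]

theorem mapAtom_ne_cert {Ag σ : Type} (α : Ag) (A : σ) : ∀ (T : Ty σ)
    (Ts : List (Ty (SAtom Ag σ))),
    Ty.mapAtom SAtom.base T ≠ Ty.arrows Ts (Ty.atom (SAtom.cert α A))
  | .atom a, [] => by simp [Ty.mapAtom, Ty.arrows]
  | .atom a, _ :: _ => by simp [Ty.mapAtom, Ty.arrows]
  | .arrow X Y, [] => by simp [Ty.mapAtom, Ty.arrows]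
  | .arrow X Y, _ :: Us => by
      intro h
      simp only [Ty.mapAtom, Ty.arrows, Ty.arrow.injEq] at h
      exact mapAtom_ne_cert α A Y Us h.2

/-- Only the constructors `m` have a certified target type. -/
theorem cert_target {Ag σ κ : Type} (conTy : κ → Ty σ) (Cs : Ag → σ → List σ)
    (c : SCon Ag σ κ) (α : Ag) (A : σ) (Ts : List (Ty (SAtom Ag σ)))
    (h : safeConTy conTy Cs c = Ty.arrows Ts (Ty.atom (SAtom.cert α A))) :
    ∃ βf : ℕ → Ag, Ts = Ty.atom (SAtom.base A) ::
          List.mapIdx (fun i B => Ty.atom (SAtom.cert (βf i) B)) (Cs α A) := by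
  cases c with
  | base c => exact absurd h (mapAtom_ne_cert α A _ _)
  | m α' A' βf =>
      simp only [safeConTy] at h
      obtain ⟨h', h''⟩ := arrows_atom_inj h
      simp only [SAtom.cert.injEq] at h''
      obtain ⟨rfl, rfl⟩ := h''
      exact ⟨βf, h'.symm⟩
  | pi α' A' =>
      have h' : Ty.arrows [Ty.atom (SAtom.cert α' A')] (Ty.atom (SAtom.base A'))
        = Ty.arrows Ts (Ty.atom (SAtom.cert α A)) := h
      have := (arrows_atom_inj h').2
      simp at this

/-- Every judgement originates from a head constructor, all of whose consumed arguments
are possessed by someone; the head constructor lies in the same class unless the type is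
certified. -/
theorem deriv_head {Ag σ κ Ag' : Type}
    (ℬ : Arch Ag' (SAtom Ag σ) (SCon Ag σ κ))
    (P : Ag → Set Ag')
    (hpart : ∀ x : Ag', ∃! α : Ag, x ∈ P α)
    (h2 : ∀ (β β' : Ag') (T : SAtom Ag σ), T ∈ ℬ.M β β' →
      (¬ ∃ α : Ag, β ∈ P α ∧ β' ∈ P α) → ∃ γ B, T = SAtom.cert γ B)
    {τ : Trace Ag' (SAtom Ag σ) (SCon Ag σ κ)} {β : Ag'} {t : Tm (SCon Ag σ κ)}
    {T : Ty (SAtom Ag σ)} (h : Deriv ℬ τ β t T) :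
    ∃ (c : SCon Ag σ κ) (Ts : List (Ty (SAtom Ag σ))) (β' : Ag'),
      ℬ.conTy c = Ty.arrows Ts T ∧ (∀ X ∈ Ts, ∃ γ s, Deriv ℬ τ γ s X) ∧ c ∈ ℬ.H β' ∧
      ((∀ γ B, T ≠ Ty.atom (SAtom.cert γ B)) → ∀ α, β ∈ P α → β' ∈ P α) := by
  induction h with
  | @init α c hc => exact ⟨c, [], α, rfl, by simp, hc, fun _ _ h => h⟩
  | @message₁ τ α β t A hM hd ih =>
      obtain ⟨c, Ts, β', e, hTs, hc, hP⟩ := ih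
      refine ⟨c, Ts, β', e, fun X hX => ?_, hc, fun hn δ hδ => hP hn δ ?_⟩
      · obtain ⟨γ, s, hs⟩ := hTs X hX
        exact ⟨γ, s, .message₂ hM hd hs⟩
      · by_cases hs : ∃ ε : Ag, α ∈ P ε ∧ β ∈ P ε
        · obtain ⟨ε, hα, hβ⟩ := hs
          rwa [(hpart β).unique hδ hβ]
        · obtain ⟨γ, B, rfl⟩ := h2 _ _ _ hM hs
          exact absurd rfl (hn γ B)
  | @message₂ τ α β γ t s A C hM hd hd' ih ih' =>
      obtain ⟨c, Ts, β', e, hTs, hc, hP⟩ := ih'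
      refine ⟨c, Ts, β', e, fun X hX => ?_, hc, hP⟩
      obtain ⟨γ, s, hs⟩ := hTs X hX
      exact ⟨γ, s, .message₂ hM hd hs⟩
  | @func τ α f t A B hf ht ihf iht =>
      obtain ⟨c, Ts, β', e, hTs, hc, hP⟩ := ihf
      refine ⟨c, Ts ++ [A], β', by rw [e, arrows_snoc], fun X hX => ?_, hc,
        fun _ => hP (by simp)⟩
      rcases List.mem_append.1 hX with hX | hX
      · exact hTs X hX
      · rw [List.mem_singleton] at hX
        subst hX
        exact ⟨α, t, ht⟩

/-- Theorem 1 of the paper: let `C` be a finite set of negative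
constraints `α ∋ A ⇒ B` (encoded by `Cs`, where `Cs α A` lists the `B` with
`α ∋ A ⇒ B` in `C`) and let `ℬ` be an architecture over `T_C` whose agents `Ag'`
include `Ag` (via the injection `ι`).  If there is a partition `{P_α}_{α ∈ Ag}` of
`Ag'` such that (1) `α ∈ P_α`; (2) any type sent between agents in different sets of
the partition has the form `C_γ(B)`; (3) if `β` initially possesses `π_{αA}` then
`β ∈ P_α`; (4) for every constraint `α ∋ A ⇒ B` in `C`, any constructor with target
type `A` initially possessed by an agent of `P_α` is `π_{αA}`; then every valid trace
through `ℬ` satisfies every negative constraint in `C`. -/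
theorem safe_partition_neg_constraints {Ag σ κ Ag' : Type}
    (conTy : κ → Ty σ) (Cs : Ag → σ → List σ)
    (hfin : {p : Ag × σ | Cs p.1 p.2 ≠ []}.Finite)
    (ι : Ag → Ag') (hι : Function.Injective ι)
    (ℬ : Arch Ag' (SAtom Ag σ) (SCon Ag σ κ))
    (hty : ℬ.conTy = safeConTy conTy Cs)
    (P : Ag → Set Ag')
    (hpart : ∀ x : Ag', ∃! α : Ag, x ∈ P α)
    (h1 : ∀ α : Ag, ι α ∈ P α)
    (h2 : ∀ (β β' : Ag') (T : SAtom Ag σ), T ∈ ℬ.M β β' →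
      (¬ ∃ α : Ag, β ∈ P α ∧ β' ∈ P α) → ∃ γ B, T = SAtom.cert γ B)
    (h3 : ∀ (β : Ag') (α : Ag) (A : σ), SCon.pi α A ∈ ℬ.H β → β ∈ P α)
    (h4 : ∀ (α : Ag) (A B : σ), B ∈ Cs α A → ∀ β ∈ P α, ∀ c ∈ ℬ.H β,
      (∃ Ts : List (Ty (SAtom Ag σ)), ℬ.conTy c = Ty.arrows Ts (Ty.atom (SAtom.base A))) →
      c = SCon.pi α A) :
    ∀ τ : Trace Ag' (SAtom Ag σ) (SCon Ag σ κ), ValidTrace ℬ τ →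
      ∀ (α : Ag) (A B : σ), B ∈ Cs α A →
        ∀ τ₁, τ₁ <+: τ →
          (∃ t, Deriv ℬ τ₁ (ι α) t (Ty.atom (SAtom.base A))) →
          ∃ β s, Deriv ℬ τ₁ β s (Ty.atom (SAtom.base B)) := by
  rintro τ - α A B hB τ₁ - ⟨t, ht⟩
  obtain ⟨c, Ts, β', e, hTs, hc, hP⟩ := deriv_head ℬ P hpart h2 ht
  obtain rfl := h4 α A B hB β' (hP (by simp) α (h1 α)) c hc ⟨Ts, e⟩
  have e' : Ty.arrows [Ty.atom (SAtom.cert α A)] (Ty.atom (SAtom.base A))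
      = Ty.arrows Ts (Ty.atom (SAtom.base A)) := by
    rw [← e, hty]; rfl
  obtain ⟨rfl, -⟩ := arrows_atom_inj e'
  have key : ∀ (γ : Ag) (D : σ), (∃ δ s, Deriv ℬ τ₁ δ s (Ty.atom (SAtom.cert γ D))) →
      ∃ βf : ℕ → Ag, ∀ X ∈ Ty.atom (SAtom.base D) ::
          List.mapIdx (fun i B => Ty.atom (SAtom.cert (βf i) B)) (Cs γ D),
        ∃ δ s, Deriv ℬ τ₁ δ s X := by
    rintro γ D ⟨δ, s, hs⟩
    obtain ⟨c, Ts, _, e, hTs, -, -⟩ := deriv_head ℬ P hpart h2 hs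
    rw [hty] at e
    obtain ⟨βf, rfl⟩ := cert_target conTy Cs c γ D Ts e
    exact ⟨βf, hTs⟩
  obtain ⟨βf, hβ⟩ := key α A (hTs _ (by simp))
  obtain ⟨i, hi, rfl⟩ := List.mem_iff_getElem.1 hB
  have hm := hβ (Ty.atom (SAtom.cert (βf i) (Cs α A)[i]))
    (List.mem_cons_of_mem _ (List.mem_mapIdx.2 ⟨i, hi, rfl⟩))
  obtain ⟨_, hg⟩ := key _ _ hm
  exact hg _ List.mem_cons_self

end PrivacyByDesign
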